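/- arXiv:2206.03533 — 2 statements merged into one kernel-verified Lean document; each statement's English description precedes it below -/
import Mathlib

section
/- If (R,m) is a local ring that is not a DW-ring, then every finitely generated w-FP-projective R-module is free. -/
open CategoryTheory

universe u

noncomputable section

variable (R : Type u) [CommRing R]

/-- The Ext group `Ext^n_R(M, N)` as an `R`-module (via `ModuleCat`). -/
def extMod (M N : Type u) [AddCommGroup M] [Module R M]
    [AddCommGroup N] [Module R N] (n : ℕ) : ModuleCat R :=
  ((Ext R (ModuleCat R) n).obj (Opposite.op (ModuleCat.of R M))).obj (ModuleCat.of R N)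

/-- `J` is a Glaz–Vasconcelos ideal: finitely generated and the natural map
`R → Hom_R(J, R)` is bijective. -/
def IsGVIdeal (J : Ideal R) : Prop :=
  J.FG ∧ Function.Bijective (fun r : R => (r • J.subtype : J →ₗ[R] R))

/-- A module is GV-torsion if every element is annihilated by some GV-ideal. -/
def IsGVTorsion (M : Type u) [AddCommGroup M] [Module R M] : Prop :=
  ∀ x : M, ∃ J : Ideal R, IsGVIdeal R J ∧ ∀ j ∈ J, j • x = 0

/-- An ideal `I` is a `w`-ideal if it is `w`-closed: whenever `J x ⊆ I` for some
GV-ideal `J`, one has `x ∈ I`. -/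
def IsWIdeal (I : Ideal R) : Prop :=
  ∀ (x : R) (J : Ideal R), IsGVIdeal R J → (∀ j ∈ J, j * x ∈ I) → x ∈ I

/-- `R` is a DW-ring if every maximal ideal is a `w`-ideal. -/
def IsDWRing : Prop :=
  ∀ m : Ideal R, m.IsMaximal → IsWIdeal R m

/-- `A` is absolutely `w`-pure if `Ext^1_R(N, A)` is GV-torsion for every
finitely presented module `N`. -/
def IsAbsolutelyWPure (A : Type u) [AddCommGroup A] [Module R A] : Prop :=
  ∀ (N : Type u) [AddCommGroup N] [Module R N], Module.FinitePresentation R N →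
    IsGVTorsion R (extMod R N A 1)

/-- `M` is `w`-FP-projective if `Ext^1_R(M, A) = 0` for every absolutely
`w`-pure module `A`. -/
def IsWFPProjective (M : Type u) [AddCommGroup M] [Module R M] : Prop :=
  ∀ (A : Type u) [AddCommGroup A] [Module R A], IsAbsolutelyWPure R A →
    Subsingleton (extMod R M A 1)

end
/-- Extension property for maps out of the kernel of a map. -/
def KerExt (R : Type u) [CommRing R] {P N : Type u} [AddCommGroup P] [Module R P]
    [AddCommGroup N] [Module R N] (p : P →ₗ[R] N)
    (A : Type u) [AddCommGroup A] [Module R A] : Prop :=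
  ∀ f : LinearMap.ker p →ₗ[R] A, ∃ h : P →ₗ[R] A, ∀ x : LinearMap.ker p, h x = f x

/-- Transfer of the extension property between projective presentations. -/
theorem KerExt.transfer {R : Type u} [CommRing R] {P Q N : Type u} [AddCommGroup P] [Module R P]
    [AddCommGroup Q] [Module R Q]
    [AddCommGroup N] [Module R N] [Module.Projective R P] [Module.Projective R Q]
    {p : P →ₗ[R] N} {q : Q →ₗ[R] N} (hp : Function.Surjective p) (hq : Function.Surjective q)
    {A : Type u} [AddCommGroup A] [Module R A] (H : KerExt R q A) : KerExt R p A := by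
  intro f
  obtain ⟨a, ha⟩ := Module.projective_lifting_property p q hp
  obtain ⟨b, hb⟩ := Module.projective_lifting_property q p hq
  have ha' : ∀ x, p (a x) = q x := fun x => LinearMap.congr_fun ha x
  have hb' : ∀ x, q (b x) = p x := fun x => LinearMap.congr_fun hb x
  let a' : LinearMap.ker q →ₗ[R] LinearMap.ker p :=
    a.restrict (fun x hx => by simpa [ha'] using hx)
  obtain ⟨g, hg⟩ := H (f ∘ₗ a')
  let c : P →ₗ[R] LinearMap.ker p :=
    (LinearMap.id - a ∘ₗ b).codRestrict _ (fun x => by simp [ha', hb'])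
  refine ⟨f ∘ₗ c + g ∘ₗ b, fun x => ?_⟩
  have hx : b x ∈ LinearMap.ker q := by
    rw [LinearMap.mem_ker, hb']; exact x.2
  have h1 := hg ⟨b x, hx⟩
  simp only [LinearMap.add_apply, LinearMap.comp_apply] at h1 ⊢
  rw [h1, ← map_add]
  congr 1
  ext
  simp [c, a', LinearMap.restrict_apply]

theorem ext_smul_eq_zero {R : Type u} [CommRing R] {N A : Type u} [AddCommGroup N] [Module R N]
    [AddCommGroup A] [Module R A] (r : R) (hr : ∀ a : A, r • a = 0) (x : extMod R N A 1) :
    r • x = 0 := by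
  let P : ProjectiveResolution (ModuleCat.of R N) := ProjectiveResolution.of _
  let e : extMod R N A 1 ≅ _ := P.isoExt (R := R) 1 (ModuleCat.of R A)
  let C := P.complex.linearYonedaObj R (ModuleCat.of R A)
  have hC : ∀ z : C.homology 1, r • z = 0 := by
    intro z
    obtain ⟨y, rfl⟩ := (ModuleCat.epi_iff_surjective (C.homologyπ 1)).1 inferInstance z
    have : r • y = 0 := by
      apply (ModuleCat.mono_iff_injective (C.iCycles 1)).1 inferInstance
      rw [map_smul, map_zero]
      generalize (C.iCycles 1) y = w
      change (P.complex.X 1 ⟶ ModuleCat.of R A) at w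
      change r • w = 0
      ext t
      exact hr _
    rw [← map_smul, this, map_zero]
  have h2 : e.hom (r • x) = e.hom 0 := by
    rw [map_smul, map_zero]; exact hC _
  exact e.toLinearEquiv.injective h2

theorem ext_subsingleton_iff {R : Type u} [CommRing R] {N A : Type u}
    [AddCommGroup N] [Module R N] [AddCommGroup A] [Module R A]
    {Q : Type u} [AddCommGroup Q] [Module R Q] [Module.Projective R Q]
    (q : Q →ₗ[R] N) (hq : Function.Surjective q) :
    Subsingleton (extMod R N A 1) ↔ KerExt R q A := by
  let P : ProjectiveResolution (ModuleCat.of R N) := ProjectiveResolution.of _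
  let e := P.isoExt (R := R) 1 (ModuleCat.of R A)
  let C := P.complex.linearYonedaObj R (ModuleCat.of R A)
  let p : P.complex.X 0 →ₗ[R] N := (P.π.f 0).hom
  have hp : Function.Surjective p := (ModuleCat.epi_iff_surjective (P.π.f 0)).1 inferInstance
  have hproj : Module.Projective R (P.complex.X 0) :=
    (IsProjective.iff_projective _).2 (P.projective 0)
  have hex1 : Function.Exact (P.complex.d 2 1).hom (P.complex.d 1 0).hom := by
    have := (ShortComplex.ShortExact.moduleCat_exact_iff_function_exact _).1 (P.exact_succ 0)
    exact this
  have hex0 : Function.Exact (P.complex.d 1 0).hom p := by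
    have := (ShortComplex.ShortExact.moduleCat_exact_iff_function_exact _).1 (P.exact₀)
    exact this
  have key : Subsingleton (extMod R N A 1) ↔ ∀ φ : P.complex.X 1 ⟶ ModuleCat.of R A,
      P.complex.d 2 1 ≫ φ = 0 → ∃ g : P.complex.X 0 ⟶ ModuleCat.of R A,
        P.complex.d 1 0 ≫ g = φ := by
    have h1 : Subsingleton (extMod R N A 1) ↔ Limits.IsZero (C.homology 1) := by
      rw [← e.isZero_iff]
      exact (ModuleCat.isZero_iff_subsingleton).symm
    rw [h1, ← HomologicalComplex.exactAt_iff_isZero_homology,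
      HomologicalComplex.exactAt_iff' _ 0 1 2 (by simp) (by simp),
      ShortComplex.moduleCat_exact_iff]
    exact Iff.rfl
  rw [key]
  constructor
  · intro H
    refine KerExt.transfer hq hp (p := q) (q := p) ?_
    intro f
    let d' : P.complex.X 1 →ₗ[R] LinearMap.ker p :=
      (P.complex.d 1 0).hom.codRestrict _ (fun x => hex0.apply_apply_eq_zero x)
    obtain ⟨g, hg⟩ := H (ModuleCat.ofHom (f ∘ₗ d')) (by
      ext x
      have : d' ((P.complex.d 2 1).hom x) = 0 := by
        ext
        exact hex1.apply_apply_eq_zero x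
      change f (d' ((P.complex.d 2 1).hom x)) = 0
      rw [this, map_zero])
    refine ⟨g.hom, ?_⟩
    rintro ⟨x, hx⟩
    obtain ⟨y, rfl⟩ := (hex0 x).1 hx
    have := LinearMap.congr_fun (congrArg ModuleCat.Hom.hom hg) y
    exact this
  · intro H φ hφ
    have H' : KerExt R p A := KerExt.transfer hp hq H
    let d' : P.complex.X 1 →ₗ[R] LinearMap.ker p :=
      (P.complex.d 1 0).hom.codRestrict _ (fun x => hex0.apply_apply_eq_zero x)
    have hd' : Function.Surjective d' := by
      rintro ⟨x, hx⟩
      obtain ⟨y, rfl⟩ := (hex0 x).1 hx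
      exact ⟨y, rfl⟩
    have hk : LinearMap.ker d' ≤ LinearMap.ker φ.hom := by
      intro x hx
      have hx' : (P.complex.d 1 0).hom x = 0 := congrArg Subtype.val hx
      obtain ⟨y, rfl⟩ := (hex1 x).1 hx'
      have := LinearMap.congr_fun (congrArg ModuleCat.Hom.hom hφ) y
      exact this
    let f : LinearMap.ker p →ₗ[R] A :=
      (LinearMap.ker d').liftQ φ.hom hk ∘ₗ (d'.quotKerEquivOfSurjective hd').symm.toLinearMap
    have hf : ∀ y, f (d' y) = φ.hom y := by
      intro y
      have : (d'.quotKerEquivOfSurjective hd').symm (d' y) = Submodule.Quotient.mk y := by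
        rw [LinearEquiv.symm_apply_eq]; rfl
      simp only [f, LinearMap.comp_apply, LinearEquiv.coe_coe, this]
      rfl
    obtain ⟨h, hh⟩ := H' f
    refine ⟨ModuleCat.ofHom h, ?_⟩
    ext y
    exact (hh (d' y)).trans (hf y)

/-- The restricted product of a family indexed by a directed order. -/
def tailZero (R : Type u) [CommRing R] {ι : Type u} [SemilatticeSup ι] [Nonempty ι]
    (E : ι → Type u) [∀ i, AddCommGroup (E i)] [∀ i, Module R (E i)] :
    Submodule R (∀ i, E i) where
  carrier := {x | ∃ i₀, ∀ i, i₀ ≤ i → x i = 0}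
  zero_mem' := ⟨Classical.arbitrary ι, fun _ _ => rfl⟩
  add_mem' := by
    rintro x y ⟨i, hi⟩ ⟨j, hj⟩
    refine ⟨i ⊔ j, fun k hk => ?_⟩
    rw [Pi.add_apply, hi k (le_sup_left.trans hk), hj k (le_sup_right.trans hk), add_zero]
  smul_mem' := by
    rintro r x ⟨i, hi⟩
    refine ⟨i, fun k hk => ?_⟩
    rw [Pi.smul_apply, hi k hk, smul_zero]

/-- A map from a finite module into the restricted product has a uniform bound. -/
theorem tailZero_bound {R : Type u} [CommRing R] {ι : Type u} [SemilatticeSup ι] [Nonempty ι]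
    {E : ι → Type u} [∀ i, AddCommGroup (E i)] [∀ i, Module R (E i)]
    {L : Type u} [AddCommGroup L] [Module R L] [Module.Finite R L] (f : L →ₗ[R] tailZero R E) :
    ∃ i₀, ∀ i, i₀ ≤ i → ∀ x, (f x).1 i = 0 := by
  classical
  obtain ⟨s, hs⟩ := Module.Finite.fg_top (R := R) (M := L)
  choose b hb using fun x => (f x).2
  obtain ⟨i₀, hi₀⟩ := (s.image b).exists_le
  refine ⟨i₀, fun i hi x => ?_⟩
  have hx : x ∈ Submodule.span R (s : Set L) := hs ▸ Submodule.mem_top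
  let g : L →ₗ[R] E i := LinearMap.proj i ∘ₗ (tailZero R E).subtype ∘ₗ f
  have hg : Submodule.span R (s : Set L) ≤ LinearMap.ker g := by
    rw [Submodule.span_le]
    intro y hy
    exact hb y i ((hi₀ _ (Finset.mem_image_of_mem b hy)).trans hi)
  exact hg hx

theorem tailZero_pure {R : Type u} [CommRing R] {ι : Type u} [SemilatticeSup ι] [Nonempty ι]
    {E : ι → Type u} [∀ i, AddCommGroup (E i)] [∀ i, Module R (E i)]
    [∀ i, Module.Injective R (E i)] (N : Type u) [AddCommGroup N] [Module R N]
    (hN : Module.FinitePresentation R N) : Subsingleton (extMod R N (tailZero R E) 1) := by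
  classical
  obtain ⟨n, q, hq⟩ := Module.Finite.exists_fin' R N
  rw [ext_subsingleton_iff q hq]
  intro f
  have : Module.Finite R (LinearMap.ker q) :=
    Module.Finite.iff_fg.2 (Module.FinitePresentation.fg_ker q hq)
  obtain ⟨i₀, hi₀⟩ := tailZero_bound f
  have hext : ∀ i, ∃ g : (Fin n → R) →ₗ[R] E i, (∀ x : LinearMap.ker q, g x = (f x).1 i) ∧
      (i₀ ≤ i → g = 0) := by
    intro i
    by_cases hi : i₀ ≤ i
    · exact ⟨0, fun x => (hi₀ i hi x).symm, fun _ => rfl⟩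
    · obtain ⟨g, hg⟩ := Module.Injective.out (R := R) (Q := E i) (LinearMap.ker q).subtype
        Subtype.val_injective (LinearMap.proj i ∘ₗ (tailZero R E).subtype ∘ₗ f)
      exact ⟨g, hg, fun h => absurd h hi⟩
  choose g hg hg0 using hext
  refine ⟨(LinearMap.pi g).codRestrict _ (fun x => ⟨i₀, fun i hi => ?_⟩), fun x => ?_⟩
  · simp [hg0 i hi]
  · ext i
    exact hg i x

theorem isGVIdeal_top (R : Type u) [CommRing R] : IsGVIdeal R ⊤ := by
  refine ⟨Ideal.fg_top R, ?_, ?_⟩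
  · intro a b h
    have := LinearMap.congr_fun h ⟨1, Submodule.mem_top⟩
    simpa using this
  · intro f
    refine ⟨f ⟨1, Submodule.mem_top⟩, ?_⟩
    ext x
    have : x = x.1 • (⟨1, Submodule.mem_top⟩ : (⊤ : Ideal R)) := by ext; simp
    conv_rhs => rw [this, map_smul]
    simp [mul_comm]

theorem exists_injective_embedding (R : Type u) [CommRing R] (X : Type u) [AddCommGroup X]
    [Module R X] : ∃ E : ModuleCat.{u} R, Module.Injective R E ∧
      ∃ f : X →ₗ[R] E, Function.Injective f := by
  let J := (EnoughInjectives.presentation (ModuleCat.of R X)).some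
  exact ⟨J.J, (Module.injective_iff_injective_object R J.J).2 J.injective, J.f.hom,
    (ModuleCat.mono_iff_injective J.f).1 J.mono⟩

/-- Enochs: finitely generated modules with enough Ext vanishing are finitely presented. -/
theorem ker_fg_of_wFPProjective {R : Type u} [CommRing R] {M : Type u} [AddCommGroup M]
    [Module R M] (hM : IsWFPProjective R M) {n : ℕ} (q : (Fin n → R) →ₗ[R] M)
    (hq : Function.Surjective q) : Module.Finite R (LinearMap.ker q) := by
  let K := LinearMap.ker q
  let ι := {S : Submodule R K // S.FG}
  let _ : SemilatticeSup ι := Subtype.semilatticeSup (fun _ _ hx hy => Submodule.FG.sup hx hy)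
  have : Nonempty ι := ⟨⟨⊥, Submodule.fg_bot⟩⟩
  choose E hE j hj using fun i : ι => exists_injective_embedding R (K ⧸ i.1)
  let E' : ι → Type u := fun i => E i
  have hA : IsAbsolutelyWPure R (tailZero R E') := by
    intro N _ _ hN x
    have := tailZero_pure (R := R) (E := E') N hN
    exact ⟨⊤, isGVIdeal_top R, fun _ _ => Subsingleton.elim _ _⟩
  have hk := (ext_subsingleton_iff q hq).1 (hM _ hA)
  let φ : K →ₗ[R] tailZero R E' :=
    (LinearMap.pi (fun i => j i ∘ₗ i.1.mkQ)).codRestrict _ (fun x => by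
      refine ⟨⟨Submodule.span R {x}, Submodule.fg_span_singleton x⟩, fun i hi => ?_⟩
      have hx : x ∈ i.1 := hi (Submodule.mem_span_singleton_self x)
      have : i.1.mkQ x = 0 := by simpa using hx
      simp only [LinearMap.pi_apply, LinearMap.comp_apply, this, map_zero])
  obtain ⟨h, hh⟩ := hk φ
  obtain ⟨i₀, hi₀⟩ := tailZero_bound h
  have htop : i₀.1 = ⊤ := by
    rw [eq_top_iff]
    intro x _
    have h1 := hi₀ i₀ le_rfl x
    rw [hh x] at h1
    have h2 : j i₀ (i₀.1.mkQ x) = 0 := h1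
    have h3 : i₀.1.mkQ x = 0 := hj i₀ (h2.trans (map_zero _).symm)
    simpa using h3
  exact ⟨htop ▸ i₀.2⟩

/-- Over a local ring which is not a DW-ring, every finitely generated
`w`-FP-projective module is free. -/
theorem free_of_wFPProjective_of_local_not_dw (R : Type u) [CommRing R] [IsLocalRing R]
    (hR : ¬ IsDWRing R)
    (M : Type u) [AddCommGroup M] [Module R M] [Module.Finite R M]
    (hM : IsWFPProjective R M) : Module.Free R M := by
  classical
  obtain ⟨n, q, hq⟩ := Module.Finite.exists_fin' R M
  have hfin := ker_fg_of_wFPProjective hM q hq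
  -- the residue field is absolutely `w`-pure
  have hA : IsAbsolutelyWPure R (IsLocalRing.ResidueField R) := by
    unfold IsDWRing IsWIdeal at hR
    push Not at hR
    obtain ⟨m, hm, x, J, hJ, hJx, hx⟩ := hR
    intro N _ _ _ y
    refine ⟨J, hJ, fun r hr => ext_smul_eq_zero r (fun a => ?_) y⟩
    have hmm : m = IsLocalRing.maximalIdeal R := IsLocalRing.eq_maximalIdeal hm
    have hrm : r ∈ IsLocalRing.maximalIdeal R := by
      rw [← hmm]
      exact (hm.isPrime.mem_or_mem (hJx r hr)).resolve_right hx
    have h0 : algebraMap R (IsLocalRing.ResidueField R) r = 0 :=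
      (IsLocalRing.residue_eq_zero_iff r).2 hrm
    rw [Algebra.smul_def, h0, zero_mul]
  have hk := (ext_subsingleton_iff q hq).1 (hM _ hA)
  refine Module.free_of_lTensor_residueField_injective (LinearMap.ker q).subtype q hq
    (LinearMap.exact_subtype_ker_map q) ?_
  let k := IsLocalRing.ResidueField R
  let T : TensorProduct R k (LinearMap.ker q) →ₗ[k] TensorProduct R k (Fin n → R) :=
    (LinearMap.ker q).subtype.baseChange k
  change Function.Injective T
  rw [injective_iff_map_eq_zero]
  intro t ht
  rw [← Module.forall_dual_apply_eq_zero_iff k]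
  intro φ
  let f : LinearMap.ker q →ₗ[R] k :=
    (φ.restrictScalars R) ∘ₗ (TensorProduct.mk R k (LinearMap.ker q) 1)
  obtain ⟨h, hh⟩ := hk f
  let ψ : TensorProduct R k (Fin n → R) →ₗ[k] k := LinearMap.liftBaseChange k h
  have : φ = ψ ∘ₗ T := by
    ext x
    simp [ψ, T, hh, f]
  rw [this, LinearMap.comp_apply, ht, map_zero]
end

section
/- A commutative ring R is a coherent DW-ring if and only if every finitely generated ideal of R is w-FP-projective. -/
open CategoryTheory

universe u

def IsCoherentRing (R : Type u) [CommRing R] : Prop :=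
  ∀ I : Ideal R, I.FG → Module.FinitePresentation R I

theorem ext_model (R : Type u) [CommRing R] (M A : Type u) [AddCommGroup M] [Module R M]
    [AddCommGroup A] [Module R A] :
    ∃ (P0 P1 P2 : ModuleCat.{u} R) (d1 : P1 →ₗ[R] P0) (d2 : P2 →ₗ[R] P1) (ε : P0 →ₗ[R] M),
      Module.Projective R P0 ∧ Function.Surjective ε ∧ Function.Exact d1 ε ∧
      Function.Exact d2 d1 ∧
      ∃ c : LinearMap.ker (LinearMap.lcomp R A d2) →ₗ[R] extMod R M A 1,
        Function.Surjective c ∧ ∀ f, c f = 0 ↔ ∃ g : P0 →ₗ[R] A, g ∘ₗ d1 = f.1 := by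
  let P := ProjectiveResolution.of (ModuleCat.of R M)
  let K := P.complex.linearYonedaObj R (ModuleCat.of R A)
  let S := K.sc' 0 1 2
  let e : extMod R M A 1 ≅ S.moduleCatLeftHomologyData.H :=
    P.isoExt 1 (ModuleCat.of R A) ≪≫ ShortComplex.homologyMapIso (K.isoSc' 0 1 2 (by simp) (by simp)) ≪≫
      S.moduleCatHomologyIso
  have hP : Projective (P.complex.X 0) := P.projective 0
  refine ⟨P.complex.X 0, P.complex.X 1, P.complex.X 2, (P.complex.d 1 0).hom,
    (P.complex.d 2 1).hom, (P.π.f 0).hom, ?_, ?_, ?_, ?_, ?_⟩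
  · exact (IsProjective.iff_projective (P.complex.X 0)).2 hP
  · have : Epi (P.π.f 0) := inferInstance
    exact (ModuleCat.epi_iff_surjective _).1 this
  · have := P.exact₀
    exact (ShortComplex.ShortExact.moduleCat_exact_iff_function_exact _).1 this
  · exact (ShortComplex.ShortExact.moduleCat_exact_iff_function_exact _).1 (P.exact_succ 0)
  · let t : LinearMap.ker (LinearMap.lcomp R A (P.complex.d 2 1).hom) →ₗ[R] LinearMap.ker S.g.hom :=
      { toFun := fun f => ⟨(ModuleCat.ofHom f.1 : P.complex.X 1 ⟶ ModuleCat.of R A), by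
          show P.complex.d 2 1 ≫ (ModuleCat.ofHom f.1 : P.complex.X 1 ⟶ ModuleCat.of R A) = 0
          apply ModuleCat.hom_ext
          exact f.2⟩
        map_add' := fun _ _ => rfl
        map_smul' := fun _ _ => rfl }
    refine ⟨e.toLinearEquiv.symm.toLinearMap ∘ₗ
      Submodule.mkQ (LinearMap.range S.moduleCatToCycles) ∘ₗ t, ?_, ?_⟩
    · refine e.toLinearEquiv.symm.surjective.comp ((Submodule.mkQ_surjective _).comp ?_)
      rintro ⟨f, hf⟩
      have h2 : P.complex.d 2 1 ≫ (show P.complex.X 1 ⟶ ModuleCat.of R A from f) = 0 := hf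
      exact ⟨⟨ModuleCat.Hom.hom (show P.complex.X 1 ⟶ ModuleCat.of R A from f),
        congrArg ModuleCat.Hom.hom h2⟩, rfl⟩
    · intro f
      have h1 : (e.toLinearEquiv.symm.toLinearMap ∘ₗ
        Submodule.mkQ (LinearMap.range S.moduleCatToCycles) ∘ₗ t) f = 0 ↔
          t f ∈ LinearMap.range S.moduleCatToCycles := by
        rw [← Submodule.Quotient.mk_eq_zero]
        exact e.toLinearEquiv.symm.map_eq_zero_iff
      rw [h1]
      constructor
      · rintro ⟨g, hg⟩
        refine ⟨ModuleCat.Hom.hom (show P.complex.X 0 ⟶ ModuleCat.of R A from g), ?_⟩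
        have := congrArg Subtype.val hg
        exact congrArg ModuleCat.Hom.hom (show P.complex.d 1 0 ≫ (show P.complex.X 0 ⟶ ModuleCat.of R A from g) = ModuleCat.ofHom f.1 from this)
      · rintro ⟨g, hg⟩
        refine ⟨(ModuleCat.ofHom g : P.complex.X 0 ⟶ ModuleCat.of R A), ?_⟩
        apply Subtype.ext
        show P.complex.d 1 0 ≫ ModuleCat.ofHom g = ModuleCat.ofHom f.1
        exact ModuleCat.hom_ext hg

theorem exists_factor {R : Type u} [CommRing R] {P Q A : Type*} [AddCommGroup P] [Module R P]
    [AddCommGroup Q] [Module R Q] [AddCommGroup A] [Module R A] (p : P →ₗ[R] Q)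
    (hp : Function.Surjective p) (f : P →ₗ[R] A) (h : ∀ x, p x = 0 → f x = 0) :
    ∃ g : Q →ₗ[R] A, ∀ x, g (p x) = f x := by
  refine ⟨(LinearMap.ker p).liftQ f (fun x hx => h x hx) ∘ₗ
    (p.quotKerEquivOfSurjective hp).symm.toLinearMap, fun x => ?_⟩
  have : (p.quotKerEquivOfSurjective hp).symm (p x) = Submodule.Quotient.mk x := by
    rw [LinearEquiv.symm_apply_eq]; rfl
  rw [LinearMap.comp_apply, LinearEquiv.coe_coe, this]
  exact Submodule.liftQ_apply _ _ _

theorem ext_pres (R : Type u) [CommRing R] (M A F : Type u) [AddCommGroup M] [Module R M]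
    [AddCommGroup A] [Module R A] [AddCommGroup F] [Module R F] [Module.Projective R F]
    (π : F →ₗ[R] M) (hπ : Function.Surjective π) :
    ∃ δ : (LinearMap.ker π →ₗ[R] A) →ₗ[R] extMod R M A 1,
      Function.Surjective δ ∧
      ∀ φ, δ φ = 0 ↔ ∃ g : F →ₗ[R] A, ∀ x : LinearMap.ker π, g x = φ x := by
  obtain ⟨P0, P1, P2, d1, d2, ε, hP0, hε, h1, h2, c, hc, hc0⟩ := ext_model R M A
  obtain ⟨α, hα⟩ := Module.projective_lifting_property π ε hπ
  obtain ⟨β, hβ⟩ := Module.projective_lifting_property ε π hε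
  have hα' : ∀ x, π (α x) = ε x := fun x => LinearMap.congr_fun hα x
  have hβ' : ∀ x, ε (β x) = π x := fun x => LinearMap.congr_fun hβ x
  have e1 : ∀ x, ε (d1 x) = 0 := h1.apply_apply_eq_zero
  have e2 : ∀ x, d1 (d2 x) = 0 := h2.apply_apply_eq_zero
  let a : P1 →ₗ[R] LinearMap.ker π := (α ∘ₗ d1).codRestrict _ (fun x => by
    simp [hα', e1])
  let b : P1 →ₗ[R] LinearMap.ker ε := d1.codRestrict _ e1
  have hb : Function.Surjective b := by
    rintro ⟨x, hx⟩
    obtain ⟨y, rfl⟩ := (h1 x).1 hx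
    exact ⟨y, rfl⟩
  let α' : LinearMap.ker ε →ₗ[R] LinearMap.ker π := α.restrict (fun x hx => by
    rw [LinearMap.mem_ker] at *; rw [hα', hx])
  let β' : LinearMap.ker π →ₗ[R] LinearMap.ker ε := β.restrict (fun x hx => by
    rw [LinearMap.mem_ker] at *; rw [hβ', hx])
  let u : P0 →ₗ[R] LinearMap.ker ε := (β ∘ₗ α - LinearMap.id).codRestrict _ (fun x => by
    simp [hα', hβ'])
  let v : F →ₗ[R] LinearMap.ker π := (α ∘ₗ β - LinearMap.id).codRestrict _ (fun x => by
    simp [hα', hβ'])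
  have ha : ∀ x, a x = α' (b x) := fun x => rfl
  have hu : ∀ x : LinearMap.ker ε, u x = β' (α' x) - x := fun x => rfl
  have hv : ∀ x : LinearMap.ker π, v x = α' (β' x) - x := fun x => rfl
  let T : (LinearMap.ker π →ₗ[R] A) →ₗ[R] LinearMap.ker (LinearMap.lcomp R A d2) :=
    (LinearMap.lcomp R A a).codRestrict _ (fun φ => by
      rw [LinearMap.mem_ker]
      ext x
      have : a (d2 x) = 0 := Subtype.ext (by simp [a, e2])
      simp [this])
  have hT : ∀ φ x, (T φ).1 x = φ (a x) := fun φ x => rfl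
  refine ⟨c ∘ₗ T, ?_, ?_⟩
  · intro y
    obtain ⟨f, rfl⟩ := hc y
    obtain ⟨fb, hfb⟩ := exists_factor b hb f.1 (fun x hx => by
      obtain ⟨z, rfl⟩ := (h2 x).1 (congrArg Subtype.val hx)
      exact LinearMap.congr_fun f.2 z)
    refine ⟨fb ∘ₗ β', ?_⟩
    rw [LinearMap.comp_apply, ← sub_eq_zero, ← map_sub, hc0]
    refine ⟨fb ∘ₗ u, ?_⟩
    ext x
    have := hu (b x)
    change fb (u (b x : P0)) = fb (β' (a x)) - f.1 x
    rw [this, map_sub, hfb, ha]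
  · intro φ
    rw [LinearMap.comp_apply, hc0]
    constructor
    · rintro ⟨g, hg⟩
      refine ⟨g ∘ₗ β - φ ∘ₗ v, fun x => ?_⟩
      have key : ∀ z : LinearMap.ker ε, g z = φ (α' z) := by
        intro z
        obtain ⟨y, rfl⟩ := hb z
        exact LinearMap.congr_fun hg y
      have := key (β' x)
      change g (β' x : P0) - φ (v x) = φ x
      rw [this, hv, map_sub]; abel
    · rintro ⟨g, hg⟩
      refine ⟨g ∘ₗ α, ?_⟩
      ext x
      exact hg (a x)

theorem gv_top (R : Type u) [CommRing R] : IsGVIdeal R (⊤ : Ideal R) := by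
  refine ⟨⟨{1}, by simp⟩, ?_, ?_⟩
  · intro r s h
    simpa using LinearMap.congr_fun h ⟨1, trivial⟩
  · intro f
    refine ⟨f ⟨1, trivial⟩, ?_⟩
    ext x
    have : x = x.1 • (⟨1, trivial⟩ : (⊤ : Ideal R)) := Subtype.ext (by simp)
    conv_rhs => rw [this, map_smul]
    simp [mul_comm]

theorem gv_ann {R : Type u} [CommRing R] {J : Ideal R} (hJ : IsGVIdeal R J) (r : R)
    (h : ∀ j ∈ J, r * j = 0) : r = 0 := by
  apply hJ.2.1
  ext x
  simpa using h x x.2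

theorem gv_mul {R : Type u} [CommRing R] {I J : Ideal R} (hI : IsGVIdeal R I)
    (hJ : IsGVIdeal R J) : IsGVIdeal R (I * J) := by
  refine ⟨hI.1.mul hJ.1, ?_, ?_⟩
  · intro r s h
    rw [← sub_eq_zero]
    apply gv_ann hJ
    intro j hj
    apply gv_ann hI
    intro i hi
    have := LinearMap.congr_fun h ⟨i * j, Ideal.mul_mem_mul hi hj⟩
    simp at this
    linear_combination this
  · intro f
    have h1 : ∀ j : J, ∃ g : R, ∀ i : I, f ⟨i * j, Ideal.mul_mem_mul i.2 j.2⟩ = g * i := by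
      intro j
      let m : I →ₗ[R] (I * J : Ideal R) :=
        { toFun := fun i => ⟨i * j, Ideal.mul_mem_mul i.2 j.2⟩
          map_add' := fun a b => Subtype.ext (by simp [add_mul])
          map_smul' := fun a b => Subtype.ext (by simp [mul_assoc]) }
      obtain ⟨g, hg⟩ := hI.2.2 (f ∘ₗ m)
      exact ⟨g, fun i => (LinearMap.congr_fun hg i).symm⟩
    choose g hg using h1
    let G : J →ₗ[R] R :=
      { toFun := g
        map_add' := fun a b => by
          rw [← sub_eq_zero]
          apply gv_ann hI
          intro i hi
          have e : (⟨i * (a + b : J), Ideal.mul_mem_mul hi (a + b).2⟩ : (I * J : Ideal R)) =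
            ⟨i * a, Ideal.mul_mem_mul hi a.2⟩ + ⟨i * b, Ideal.mul_mem_mul hi b.2⟩ :=
            Subtype.ext (by simp [mul_add])
          have := congrArg f e
          rw [map_add, hg (a + b) ⟨i, hi⟩, hg a ⟨i, hi⟩, hg b ⟨i, hi⟩] at this
          simp only at this
          linear_combination this
        map_smul' := fun a b => by
          rw [← sub_eq_zero]
          apply gv_ann hI
          intro i hi
          have e : (⟨i * (a • b : J), Ideal.mul_mem_mul hi (a • b).2⟩ : (I * J : Ideal R)) =
            a • ⟨i * b, Ideal.mul_mem_mul hi b.2⟩ :=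
            Subtype.ext (by simp [mul_left_comm])
          have := congrArg f e
          rw [map_smul, hg (a • b) ⟨i, hi⟩, hg b ⟨i, hi⟩] at this
          simp only [smul_eq_mul] at this
          simp only [smul_eq_mul, RingHom.id_apply]
          linear_combination this }
    obtain ⟨r, hr⟩ := hJ.2.2 G
    have hr' : ∀ j : J, g j = r * j := fun j => (LinearMap.congr_fun hr j).symm
    refine ⟨r, ?_⟩
    ext ⟨x, hx⟩
    change r * x = f ⟨x, hx⟩
    induction hx using Submodule.mul_induction_on' with
    | mem_mul_mem i hi j hj =>
      have := hg ⟨j, hj⟩ ⟨i, hi⟩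
      rw [hr'] at this
      exact (this.trans (by ring)).symm
    | add x hx y hy h1 h2 =>
      rw [mul_add, h1, h2, ← map_add]; rfl

theorem gv_fg {R : Type u} [CommRing R] {A : Type u} [AddCommGroup A] [Module R A]
    (hA : IsGVTorsion R A) (S : Submodule R A) (hS : S.FG) :
    ∃ J : Ideal R, IsGVIdeal R J ∧ ∀ j ∈ J, ∀ x ∈ S, j • x = 0 := by
  induction S, hS using Submodule.fg_induction with
  | singleton x =>
    obtain ⟨J, hJ, h⟩ := hA x
    refine ⟨J, hJ, fun j hj y hy => ?_⟩
    obtain ⟨r, rfl⟩ := Submodule.mem_span_singleton.1 hy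
    rw [smul_comm, h j hj, smul_zero]
  | sup S T hS hT h1 h2 =>
    obtain ⟨I, hI, h1⟩ := h1
    obtain ⟨J, hJ, h2⟩ := h2
    refine ⟨I * J, gv_mul hI hJ, fun j hj y hy => ?_⟩
    obtain ⟨s, hs, t, ht, rfl⟩ := Submodule.mem_sup.1 hy
    have hjI : j ∈ I := (Ideal.mul_le_left : I * J ≤ I) hj
    have hjJ : j ∈ J := (Ideal.mul_le_right : I * J ≤ J) hj
    rw [smul_add, h1 j hjI s hs, h2 j hjJ t ht, add_zero]

theorem awp_of_torsion {R : Type u} [CommRing R] {A : Type u} [AddCommGroup A] [Module R A]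
    (hA : IsGVTorsion R A) : IsAbsolutelyWPure R A := by
  intro N _ _ hN y
  obtain ⟨n, π, hπ⟩ := Module.Finite.exists_fin' R N
  have hk : (LinearMap.ker π).FG := Module.FinitePresentation.fg_ker π hπ
  obtain ⟨δ, hδ, hδ0⟩ := ext_pres R N A (Fin n → R) π hπ
  obtain ⟨φ, rfl⟩ := hδ y
  have : Module.Finite R (LinearMap.ker π) := Module.Finite.iff_fg.2 hk
  obtain ⟨J, hJ, h⟩ := gv_fg hA (LinearMap.range φ) (Module.Finite.iff_fg.1 inferInstance)
  refine ⟨J, hJ, fun j hj => ?_⟩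
  rw [← map_smul]
  convert map_zero δ
  ext x
  exact h j hj _ ⟨x, rfl⟩

theorem awp_of_extends {R : Type u} [CommRing R] {A : Type u} [AddCommGroup A] [Module R A]
    (hA : ∀ (n : ℕ) (K : Submodule R (Fin n → R)), K.FG → ∀ φ : K →ₗ[R] A,
      ∃ g : (Fin n → R) →ₗ[R] A, ∀ x : K, g x = φ x) : IsAbsolutelyWPure R A := by
  intro N _ _ hN y
  obtain ⟨n, π, hπ⟩ := Module.Finite.exists_fin' R N
  have hk : (LinearMap.ker π).FG := Module.FinitePresentation.fg_ker π hπ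
  obtain ⟨δ, hδ, hδ0⟩ := ext_pres R N A (Fin n → R) π hπ
  obtain ⟨φ, rfl⟩ := hδ y
  refine ⟨⊤, gv_top R, fun j _ => ?_⟩
  rw [(hδ0 φ).2 (hA n _ hk φ), smul_zero]

theorem exists_inj (R : Type u) [CommRing R] (Q : Type u) [AddCommGroup Q] [Module R Q] :
    ∃ (E : ModuleCat.{u} R) (i : Q →ₗ[R] E), Module.Injective R E ∧ Function.Injective i := by
  refine ⟨Injective.under (ModuleCat.of R Q), (Injective.ι (ModuleCat.of R Q)).hom, ?_, ?_⟩
  · exact (Module.injective_iff_injective_object R _).2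
      (inferInstanceAs (Injective (Injective.under (ModuleCat.of R Q))))
  · exact (ModuleCat.mono_iff_injective _).1 inferInstance

theorem fg_of_extends {R : Type u} [CommRing R] {F : Type u} [AddCommGroup F] [Module R F]
    [Module.Finite R F] (K : Submodule R F)
    (H : ∀ (A : Type u) [AddCommGroup A] [Module R A], IsAbsolutelyWPure R A →
      ∀ φ : K →ₗ[R] A, ∃ g : F →ₗ[R] A, ∀ x : K, g x = φ x) : K.FG := by
  let ι := {S : Submodule R K // S.FG}
  have hE : ∀ S : ι, ∃ (E : ModuleCat.{u} R) (i : (K ⧸ S.1) →ₗ[R] E),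
    Module.Injective R E ∧ Function.Injective i := fun S => exists_inj R _
  choose E i hE hi using hE
  have sup_le : ∀ S T : ι, ∃ U : ι, S ≤ U ∧ T ≤ U := fun S T =>
    ⟨⟨S.1 ⊔ T.1, S.2.sup T.2⟩, le_sup_left (a := S.1), le_sup_right (a := S.1)⟩
  let A : Submodule R (∀ S : ι, E S) :=
    { carrier := {x | ∃ S0, ∀ S, S0 ≤ S → x S = 0}
      zero_mem' := ⟨⟨⊥, Submodule.fg_bot⟩, fun _ _ => rfl⟩
      add_mem' := by
        rintro x y ⟨S, hS⟩ ⟨T, hT⟩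
        obtain ⟨U, h1, h2⟩ := sup_le S T
        exact ⟨U, fun V hV => by
          simp [hS V (h1.trans hV), hT V (h2.trans hV)]⟩
      smul_mem' := by
        rintro r x ⟨S, hS⟩
        exact ⟨S, fun V hV => by simp [hS V hV]⟩ }
  have hAfg : ∀ T : Submodule R A, T.FG → ∃ S0, ∀ x ∈ T, ∀ S, S0 ≤ S → x.1 S = 0 := by
    intro T hT
    induction T, hT using Submodule.fg_induction with
    | singleton x =>
      obtain ⟨S0, h⟩ := x.2
      refine ⟨S0, fun y hy S hS => ?_⟩
      obtain ⟨r, rfl⟩ := Submodule.mem_span_singleton.1 hy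
      simp [h S hS]
    | sup S T hS hT h1 h2 =>
      obtain ⟨S0, h1⟩ := h1
      obtain ⟨T0, h2⟩ := h2
      obtain ⟨U, h3, h4⟩ := sup_le S0 T0
      refine ⟨U, fun y hy V hV => ?_⟩
      obtain ⟨s, hs, t, ht, rfl⟩ := Submodule.mem_sup.1 hy
      simp [h1 s hs V (h3.trans hV), h2 t ht V (h4.trans hV)]
  have hA : IsAbsolutelyWPure R A := by
    apply awp_of_extends
    intro n L hL φ
    have : Module.Finite R L := Module.Finite.iff_fg.2 hL
    obtain ⟨S0, h0⟩ := hAfg (LinearMap.range φ) (Module.Finite.iff_fg.1 inferInstance)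
    have h1 : ∀ S : ι, ∃ g : (Fin n → R) →ₗ[R] E S, (∀ x : L, g x = (φ x).1 S) ∧
        (S0 ≤ S → g = 0) := by
      intro S
      by_cases hS : S0 ≤ S
      · exact ⟨0, fun x => (h0 _ ⟨x, rfl⟩ S hS).symm, fun _ => rfl⟩
      · obtain ⟨g, hg⟩ := (hE S).out L.subtype L.injective_subtype
          (LinearMap.proj S ∘ₗ A.subtype ∘ₗ φ)
        exact ⟨g, hg, fun h => absurd h hS⟩
    choose g hg hg0 using h1
    refine ⟨(LinearMap.pi g).codRestrict A (fun x => ⟨S0, fun S hS => by simp [hg0 S hS]⟩), ?_⟩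
    intro x
    apply Subtype.ext
    funext S
    exact hg S x
  let Φ : K →ₗ[R] A := (LinearMap.pi (fun S : ι => i S ∘ₗ S.1.mkQ)).codRestrict A (fun x =>
    ⟨⟨R ∙ x, Submodule.fg_span_singleton x⟩, fun S hS => by
      have : x ∈ S.1 := hS (Submodule.mem_span_singleton_self x)
      simp [(Submodule.Quotient.mk_eq_zero S.1).2 this]⟩)
  obtain ⟨g, hg⟩ := H A hA Φ
  obtain ⟨S0, h0⟩ := hAfg (LinearMap.range g) (Module.Finite.iff_fg.1 inferInstance)
  have : S0.1 = ⊤ := by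
    rw [eq_top_iff]
    intro x _
    have h1 := h0 _ ⟨x, rfl⟩ S0 le_rfl
    rw [hg] at h1
    change i S0 (S0.1.mkQ x) = 0 at h1
    rw [← map_zero (i S0)] at h1
    exact (Submodule.Quotient.mk_eq_zero S0.1).1 (hi S0 h1)
  have h2 := S0.2
  rw [this] at h2
  exact (Submodule.fg_top K).1 h2

theorem exists_extend {R : Type u} [CommRing R] {M A F : Type u} [AddCommGroup M] [Module R M]
    [AddCommGroup A] [Module R A] [AddCommGroup F] [Module R F] [Module.Projective R F]
    (hM : IsWFPProjective R M) (hA : IsAbsolutelyWPure R A)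
    (π : F →ₗ[R] M) (hπ : Function.Surjective π) (φ : LinearMap.ker π →ₗ[R] A) :
    ∃ g : F →ₗ[R] A, ∀ x : LinearMap.ker π, g x = φ x := by
  obtain ⟨δ, hδ, hδ0⟩ := ext_pres R M A F π hπ
  have := hM A hA
  exact (hδ0 φ).1 (Subsingleton.elim _ _)

theorem gv_eq_top {R : Type u} [CommRing R] {J : Ideal R} (hJ : IsGVIdeal R J)
    (H : IsWFPProjective R J) : J = ⊤ := by
  have : Module.Finite R J := Module.Finite.iff_fg.2 hJ.1
  obtain ⟨n, π, hπ⟩ := Module.Finite.exists_fin' R J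
  have hk : (LinearMap.ker π).FG := fg_of_extends _ (fun A _ _ hA φ => exists_extend H hA π hπ φ)
  have : Module.Finite R (LinearMap.ker π) := Module.Finite.iff_fg.2 hk
  let T : Submodule R (LinearMap.ker π) := J • ⊤
  have hT : IsGVTorsion R (LinearMap.ker π ⧸ T) := by
    intro x
    refine ⟨J, hJ, fun j hj => ?_⟩
    obtain ⟨y, rfl⟩ := T.mkQ_surjective x
    rw [← map_smul]
    exact (Submodule.Quotient.mk_eq_zero T).2 (Submodule.smul_mem_smul hj trivial)
  obtain ⟨g0, hg0⟩ := exists_extend H (awp_of_torsion hT) π hπ T.mkQ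
  obtain ⟨g, hg⟩ := Module.projective_lifting_property T.mkQ g0 T.mkQ_surjective
  let gK : Module.End R (LinearMap.ker π) := g ∘ₗ (LinearMap.ker π).subtype
  have hr : LinearMap.range (1 - gK) ≤ J • ⊤ := by
    rintro _ ⟨x, rfl⟩
    rw [← (Submodule.Quotient.mk_eq_zero T)]
    change T.mkQ (x - g x) = 0
    rw [map_sub, ← hg0, ← hg]
    simp
  obtain ⟨p, hp, -, hp1, hp2⟩ :=
    LinearMap.exists_monic_and_natDegree_eq_and_coeff_mem_pow_and_aeval_eq_zero R (1 - gK) J hr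
  have hu : p.eval 1 - 1 ∈ J := by
    rw [Polynomial.eval_eq_sum_range, Finset.sum_range_succ]
    have hl : p.coeff p.natDegree = 1 := hp
    simp only [one_pow, mul_one, hl, add_sub_cancel_right]
    refine J.sum_mem (fun k hk => ?_)
    have hk' := Finset.mem_range.1 hk
    exact Ideal.pow_le_self (by omega) (hp1 k)
  obtain ⟨q, hq⟩ := Polynomial.X_sub_C_dvd_sub_C_eval (a := (1 : R)) (p := p)
  set u := p.eval 1 with hudef
  have hK : ∀ x : LinearMap.ker π, Polynomial.aeval (1 - gK) q (g x) = u • x := by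
    intro x
    have h5 := congrArg (Polynomial.aeval (1 - gK)) hq
    rw [map_sub, hp2, mul_comm, map_mul, map_sub, Polynomial.aeval_X, Polynomial.aeval_C,
      Polynomial.aeval_C, map_one] at h5
    have h6 := LinearMap.congr_fun h5 x
    have h7 : (1 - gK - 1) x = - g x := by
      change x - g x - x = - g x
      abel
    rw [Module.End.mul_apply, h7, map_neg] at h6
    change 0 - u • x = _ at h6
    rw [zero_sub, neg_inj] at h6
    exact h6.symm
  let s' : (Fin n → R) →ₗ[R] (Fin n → R) :=
    u • LinearMap.id - (LinearMap.ker π).subtype ∘ₗ (Polynomial.aeval (1 - gK) q) ∘ₗ g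
  obtain ⟨s, hs⟩ := exists_factor π hπ s' (fun x hx => by
    have := hK ⟨x, hx⟩
    simp only at this
    simp [s', this])
  have hπs : ∀ x, π (s x) = u • x := by
    intro x
    obtain ⟨y, rfl⟩ := hπ x
    rw [hs]
    simp [s']
  have hri : ∀ i : Fin n, ∃ r : R, ∀ x : J, s x i = r * x := by
    intro i
    obtain ⟨r, hr⟩ := hJ.2.2 (LinearMap.proj i ∘ₗ s)
    exact ⟨r, fun x => (LinearMap.congr_fun hr x).symm⟩
  choose r hr using hri
  have hsx : ∀ x : J, s x = x.1 • r := fun x => by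
    funext i
    rw [hr]; simp [mul_comm]
  have hur : u = (π r : R) := by
    rw [← sub_eq_zero]
    apply gv_ann hJ
    intro j hj
    have h3 := hπs ⟨j, hj⟩
    rw [hsx, map_smul] at h3
    have h4 := congrArg Subtype.val h3
    simp at h4
    linear_combination -h4
  rw [Ideal.eq_top_iff_one]
  have : u ∈ J := by rw [hur]; exact (π r).2
  simpa using J.sub_mem this hu

/-- `R` is a coherent DW-ring iff every finitely generated ideal is `w`-FP-projective. -/
theorem isCoherentDW_iff_fg_ideal_wFPProjective (R : Type u) [CommRing R] :
    (IsCoherentRing R ∧ IsDWRing R) ↔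
      ∀ I : Ideal R, I.FG → IsWFPProjective R I := by
  constructor
  · rintro ⟨hc, hd⟩ I hI A _ _ hA
    refine ⟨fun x y => ?_⟩
    rw [← sub_eq_zero]
    obtain ⟨J, hJ, h⟩ := hA I (hc I hI) (x - y)
    have : J = ⊤ := by
      by_contra hne
      obtain ⟨m, hm, hle⟩ := Ideal.exists_le_maximal J hne
      have := hd m hm 1 J hJ (fun j hj => by simpa using hle hj)
      exact hm.ne_top ((Ideal.eq_top_iff_one m).2 this)
    simpa using h 1 (this ▸ trivial)
  · intro H
    refine ⟨fun I hI => ?_, fun m hm x J hJ h => ?_⟩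
    · have : Module.Finite R I := Module.Finite.iff_fg.2 hI
      obtain ⟨n, π, hπ⟩ := Module.Finite.exists_fin' R I
      refine Module.finitePresentation_of_surjective π hπ ?_
      exact fg_of_extends _ (fun A _ _ hA φ => exists_extend (H I hI) hA π hπ φ)
    · have := gv_eq_top hJ (H J hJ.1)
      simpa using h 1 (this ▸ trivial)
end
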